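/- arXiv:2605.15933 — 2 statements merged into one kernel-verified Lean document; each statement's English description precedes it below -/
import Mathlib

section
/- Short exact sequence for the cohomology of the BGG output complex: with the BGG setup (Sⁱ injective for i < j, Sʲ bijective, Sⁱ surjective for i > j), for every i there is a short exact sequence 0 → coker(S̃^{i-1}) → H^i(C•) → ker(S̃^i) → 0, where S̃^i : H^i(A•) → H^{i+1}(B•) is the map induced on cohomology by S. -/
open Function

variable (R : Type) [CommRing R]

/-- Cocycles in degree `i+1`. -/
abbrev cocycles {X : ℤ → Type} [∀ i, AddCommGroup (X i)] [∀ i, Module R (X i)]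
    (d : ∀ i : ℤ, X i →ₗ[R] X (i + 1)) (i : ℤ) : Submodule R (X (i + 1)) :=
  LinearMap.ker (d (i + 1))

/-- Coboundaries in degree `i+1`, viewed inside the cocycles. -/
abbrev cobounds {X : ℤ → Type} [∀ i, AddCommGroup (X i)] [∀ i, Module R (X i)]
    (d : ∀ i : ℤ, X i →ₗ[R] X (i + 1)) (i : ℤ) : Submodule R (cocycles R d i) :=
  (LinearMap.range (d i)).comap (cocycles R d i).subtype

/-- Cohomology in degree `i+1`: `ker (d (i+1)) / im (d i)`. -/
abbrev Hmod {X : ℤ → Type} [∀ i, AddCommGroup (X i)] [∀ i, Module R (X i)]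
    (d : ∀ i : ℤ, X i →ₗ[R] X (i + 1)) (i : ℤ) : Type :=
  cocycles R d i ⧸ cobounds R d i

/-- The map induced on cohomology by a chain map `f`. -/
noncomputable def inducedH {X Y : ℤ → Type}
    [∀ i, AddCommGroup (X i)] [∀ i, Module R (X i)]
    [∀ i, AddCommGroup (Y i)] [∀ i, Module R (Y i)]
    (dX : ∀ i : ℤ, X i →ₗ[R] X (i + 1)) (dY : ∀ i : ℤ, Y i →ₗ[R] Y (i + 1))
    (f : ∀ i : ℤ, X i →ₗ[R] Y i)
    (hf : ∀ i : ℤ, (dY i).comp (f i) = (f (i + 1)).comp (dX i)) (i : ℤ) :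
    Hmod R dX i →ₗ[R] Hmod R dY i :=
  Submodule.mapQ (cobounds R dX i) (cobounds R dY i)
    ((f (i + 1)).restrict (p := cocycles R dX i) (q := cocycles R dY i)
      (fun x hx => by
        have h := congrArg (fun g => g x) (hf (i + 1))
        simp only [LinearMap.coe_comp, Function.comp_apply] at h
        simp only [cocycles, LinearMap.mem_ker] at hx ⊢
        rw [h, hx, map_zero]))
    (fun x hx => by
      obtain ⟨y, hy⟩ := hx
      have h := congrArg (fun g => g y) (hf i)
      simp only [LinearMap.coe_comp, Function.comp_apply] at h
      refine ⟨f i y, ?_⟩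
      simpa [LinearMap.restrict_apply, hy] using h.symm ▸ congrArg (f (i+1)) hy)

/-- Cocycles of the mapping cone. -/
def coneZ {A1 A2 B1 B2 : Type} [AddCommGroup A1] [Module R A1] [AddCommGroup A2] [Module R A2]
    [AddCommGroup B1] [Module R B1] [AddCommGroup B2] [Module R B2]
    (dA : A1 →ₗ[R] A2) (dB : B1 →ₗ[R] B2) (S : A1 →ₗ[R] B2) : Submodule R (A1 × B1) where
  carrier := {p | dA p.1 = 0 ∧ dB p.2 = S p.1}
  zero_mem' := by simp
  add_mem' := by
    rintro p q ⟨h1, h2⟩ ⟨h3, h4⟩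
    simp [h1, h2, h3, h4]
  smul_mem' := by
    rintro c p ⟨h1, h2⟩
    simp [h1, h2]

/-- Coboundaries of the mapping cone. -/
def coneB {A0 A1 B0 B1 : Type} [AddCommGroup A0] [Module R A0] [AddCommGroup A1] [Module R A1]
    [AddCommGroup B0] [Module R B0] [AddCommGroup B1] [Module R B1]
    (dA : A0 →ₗ[R] A1) (dB : B0 →ₗ[R] B1) (S : A0 →ₗ[R] B1) : Submodule R (A1 × B1) where
  carrier := {p | ∃ x y, p.1 = dA x ∧ p.2 = S x + dB y}
  zero_mem' := ⟨0, 0, by simp⟩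
  add_mem' := by
    rintro p q ⟨x, y, h1, h2⟩ ⟨x', y', h3, h4⟩
    refine ⟨x + x', y + y', ?_, ?_⟩
    · simp [h1, h3]
    · simp only [Prod.snd_add, h2, h4, map_add]; abel
  smul_mem' := by
    rintro c p ⟨x, y, h1, h2⟩
    exact ⟨c • x, c • y, by simp [h1], by simp [h2]⟩

theorem ses_of_cone
    (A B : ℤ → Type)
    [∀ i, AddCommGroup (A i)] [∀ i, Module R (A i)]
    [∀ i, AddCommGroup (B i)] [∀ i, Module R (B i)]
    (dA : ∀ i : ℤ, A i →ₗ[R] A (i + 1))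
    (dB : ∀ i : ℤ, B i →ₗ[R] B (i + 1))
    (S : ∀ i : ℤ, A i →ₗ[R] B (i + 1))
    (hddA : ∀ i : ℤ, (dA (i + 1)).comp (dA i) = 0)
    (hcomm : ∀ i : ℤ, (dB (i + 1)).comp (S i) = (S (i + 1)).comp (dA i))
    (n : ℤ) (M : Type) [AddCommGroup M] [Module R M]
    (e : (coneZ R (dA (n+1+1)) (dB (n+1+1)) (S (n+1+1)) ⧸
      (coneB R (dA (n+1)) (dB (n+1)) (S (n+1))).comap
        (coneZ R (dA (n+1+1)) (dB (n+1+1)) (S (n+1+1))).subtype) ≃ₗ[R] M) :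
      ∃ (f : (Hmod R (fun m => dB (m + 1)) n ⧸
                LinearMap.range (inducedH R dA (fun m => dB (m + 1)) S hcomm n))
              →ₗ[R] M)
        (g : M →ₗ[R] Hmod R dA (n + 1)),
        Function.Injective f ∧
        LinearMap.range f = LinearMap.ker g ∧
        LinearMap.range g =
          LinearMap.ker (inducedH R dA (fun m => dB (m + 1)) S hcomm (n + 1)) := by
  have hddA' : ∀ i x, dA (i+1) (dA i x) = 0 := fun i x => LinearMap.congr_fun (hddA i) x
  have hcomm' : ∀ i x, dB (i+1) (S i x) = S (i+1) (dA i x) :=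
    fun i x => LinearMap.congr_fun (hcomm i) x
  let Z := coneZ R (dA (n+1+1)) (dB (n+1+1)) (S (n+1+1))
  let Bd := (coneB R (dA (n+1)) (dB (n+1)) (S (n+1))).comap Z.subtype
  -- the maps on cocycles
  let ι : cocycles R (X := fun m => B (m+1)) (fun m => dB (m + 1)) n →ₗ[R] Z :=
    LinearMap.codRestrict Z ((LinearMap.inr R (A (n+1+1)) (B (n+1+1))).comp
      (Submodule.subtype _)) (fun b => ⟨by simp, by
        have := b.2
        simpa using this⟩)
  let π : Z →ₗ[R] cocycles R dA (n+1) :=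
    LinearMap.codRestrict _ ((LinearMap.fst R (A (n+1+1)) (B (n+1+1))).comp Z.subtype)
      (fun z => z.2.1)
  let f0 : Hmod R (X := fun m => B (m+1)) (fun m => dB (m + 1)) n →ₗ[R] (Z ⧸ Bd) :=
    Submodule.mapQ _ Bd ι (by
      rintro b ⟨y, hy⟩
      refine ⟨0, y, ?_, ?_⟩
      · change (0 : A (n+1+1)) = dA (n+1) 0
        rw [map_zero]
      · change b.1 = S (n+1) 0 + dB (n+1) y
        rw [map_zero, zero_add]
        exact hy.symm)
  let f1 := Submodule.liftQ (LinearMap.range (inducedH R dA (fun m => dB (m + 1)) S hcomm n)) f0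
    (by
      rintro _ ⟨x, rfl⟩
      obtain ⟨x, rfl⟩ := Submodule.Quotient.mk_surjective _ x
      rw [LinearMap.mem_ker]
      refine (Submodule.Quotient.mk_eq_zero Bd).2 ?_
      refine ⟨x.1, 0, ?_, ?_⟩
      · exact x.2.symm
      · change S (n+1) x.1 = S (n+1) x.1 + dB (n+1) 0
        rw [map_zero, add_zero])
  let g1 : (Z ⧸ Bd) →ₗ[R] Hmod R dA (n+1) :=
    Submodule.mapQ Bd _ π (by
      rintro z ⟨x, y, h1, h2⟩
      exact ⟨x, h1.symm⟩)
  refine ⟨e.toLinearMap.comp f1, g1.comp e.symm.toLinearMap, ?_, ?_, ?_⟩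
  · rw [LinearMap.coe_comp]
    refine e.injective.comp ?_
    rw [← LinearMap.ker_eq_bot, LinearMap.ker_eq_bot']
    intro q hq
    obtain ⟨q, rfl⟩ := Submodule.Quotient.mk_surjective _ q
    obtain ⟨b, rfl⟩ := Submodule.Quotient.mk_surjective _ q
    have hq' : ι b ∈ Bd := (Submodule.Quotient.mk_eq_zero Bd).1 hq
    obtain ⟨x, y, h1, h2⟩ := hq'
    refine (Submodule.Quotient.mk_eq_zero _).2 ?_
    refine ⟨Submodule.Quotient.mk ⟨x, h1.symm⟩, ?_⟩
    refine (Submodule.Quotient.eq _).2 ?_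
    have h2' : b.1 = S (n+1) x + dB (n+1) y := h2
    refine ⟨-y, ?_⟩
    change dB (n+1) (-y) = S (n+1) x - b.1
    rw [h2', map_neg]; abel
  · ext m
    obtain ⟨m, rfl⟩ := e.surjective m
    obtain ⟨z, rfl⟩ := Submodule.Quotient.mk_surjective _ m
    simp only [LinearMap.mem_range, LinearMap.mem_ker, LinearMap.comp_apply,
      LinearEquiv.coe_coe, LinearEquiv.symm_apply_apply, EmbeddingLike.apply_eq_iff_eq]
    constructor
    · rintro ⟨q, hq⟩
      obtain ⟨q, rfl⟩ := Submodule.Quotient.mk_surjective _ q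
      obtain ⟨b, rfl⟩ := Submodule.Quotient.mk_surjective _ q
      obtain ⟨x, y, h1, h2⟩ := (Submodule.Quotient.eq Bd).1 hq
      refine (Submodule.Quotient.mk_eq_zero _).2 ⟨-x, ?_⟩
      have h1' : 0 - z.1.1 = dA (n+1) x := h1
      change dA (n+1) (-x) = z.1.1
      rw [map_neg, ← h1']; abel
    · intro h
      obtain ⟨x, hx⟩ := (Submodule.Quotient.mk_eq_zero _).1 h
      have hx' : dA (n+1) x = z.1.1 := hx
      refine ⟨Submodule.Quotient.mk (Submodule.Quotient.mk ⟨z.1.2 - S (n+1) x, ?_⟩), ?_⟩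
      · change dB (n+1+1) (z.1.2 - S (n+1) x) = 0
        rw [map_sub, hcomm', hx', z.2.2, sub_self]
      · refine (Submodule.Quotient.eq Bd).2 ⟨-x, 0, ?_, ?_⟩
        · change 0 - z.1.1 = dA (n+1) (-x)
          rw [map_neg, hx']; abel
        · change z.1.2 - S (n+1) x - z.1.2 = S (n+1) (-x) + dB (n+1) 0
          rw [map_neg, map_zero]; abel
  · ext q
    obtain ⟨a, rfl⟩ := Submodule.Quotient.mk_surjective _ q
    constructor
    · rintro ⟨m, hm⟩
      obtain ⟨m, rfl⟩ := e.surjective m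
      obtain ⟨z, rfl⟩ := Submodule.Quotient.mk_surjective _ m
      simp only [LinearMap.comp_apply,
        LinearEquiv.coe_coe, LinearEquiv.symm_apply_apply] at hm
      rw [← hm]
      refine (Submodule.Quotient.mk_eq_zero _).2 ?_
      exact ⟨z.1.2, z.2.2⟩
    · intro h
      obtain ⟨b, hb⟩ := (Submodule.Quotient.mk_eq_zero _).1 h
      refine ⟨e (Submodule.Quotient.mk ⟨(a.1, b), a.2, hb⟩), ?_⟩
      simp only [LinearMap.comp_apply,
        LinearEquiv.coe_coe, LinearEquiv.symm_apply_apply]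
      rfl

/-- Short exact sequence for the cohomology of the BGG output complex.  Let
`A`, `B` be cochain complexes with degree-one chain maps `S i : A i → B (i+1)`, with `S i`
injective for `i < j+1`, `S (j+1)` bijective (with inverse `Sinv`), `S i` surjective for
`i > j+1`.  Let `Cx` be the output complex: `Cx i = coker S^{i-1}` for `i ≤ j+1`
(realized by surjections `P i : B i → Cx i` with kernel `im S^{i-1}`, commuting with the
differentials), `Cx i = ker S^i` for `i > j+1` (realized by injections `I i : Cx i → A i`
with range `ker S i`, commuting with the differentials), and with connecting differential
`D = d ∘ (S^{j+1})⁻¹ ∘ d` at the junction.  Then for every degree there is a short exact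
sequence `0 → coker S̃^{i-1} → H^i(Cx) → ker S̃^i → 0`, where
`S̃^i : H^i(A) → H^{i+1}(B)` is the map induced on cohomology by `S`. -/
theorem stmt4_bgg_output_cohomology_short_exact_sequence
    (A B Cx : ℤ → Type)
    [∀ i, AddCommGroup (A i)] [∀ i, Module R (A i)]
    [∀ i, AddCommGroup (B i)] [∀ i, Module R (B i)]
    [∀ i, AddCommGroup (Cx i)] [∀ i, Module R (Cx i)]
    (dA : ∀ i : ℤ, A i →ₗ[R] A (i + 1))
    (dB : ∀ i : ℤ, B i →ₗ[R] B (i + 1))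
    (dCx : ∀ i : ℤ, Cx i →ₗ[R] Cx (i + 1))
    (hddA : ∀ i : ℤ, (dA (i + 1)).comp (dA i) = 0)
    (hddB : ∀ i : ℤ, (dB (i + 1)).comp (dB i) = 0)
    (hddCx : ∀ i : ℤ, (dCx (i + 1)).comp (dCx i) = 0)
    (S : ∀ i : ℤ, A i →ₗ[R] B (i + 1))
    (hcomm : ∀ i : ℤ, (dB (i + 1)).comp (S i) = (S (i + 1)).comp (dA i))
    (j : ℤ)
    (hinj : ∀ i : ℤ, i < j + 1 → Function.Injective (S i))
    (Sinv : B (j + 1 + 1) →ₗ[R] A (j + 1))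
    (hSinv₁ : ∀ b : B (j + 1 + 1), S (j + 1) (Sinv b) = b)
    (hSinv₂ : ∀ a : A (j + 1), Sinv (S (j + 1) a) = a)
    (hsurj : ∀ i : ℤ, j + 1 < i → Function.Surjective (S i))
    -- in degrees i ≤ j+1, Cx is the cokernel of S, via the projections P
    (P : ∀ i : ℤ, B i →ₗ[R] Cx i)
    (hP_surj : ∀ i : ℤ, i ≤ j + 1 → Function.Surjective (P i))
    (hP_ker : ∀ i : ℤ, i + 1 ≤ j + 1 → LinearMap.ker (P (i + 1)) = LinearMap.range (S i))
    (hP_comm : ∀ i : ℤ, i + 1 ≤ j + 1 →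
      (dCx i).comp (P i) = (P (i + 1)).comp (dB i))
    -- in degrees i > j+1, Cx is the kernel of S, via the inclusions I
    (I : ∀ i : ℤ, Cx i →ₗ[R] A i)
    (hI_inj : ∀ i : ℤ, j + 1 < i → Function.Injective (I i))
    (hI_range : ∀ i : ℤ, j + 1 < i → LinearMap.range (I i) = LinearMap.ker (S i))
    (hI_comm : ∀ i : ℤ, j + 1 < i → (dA i).comp (I i) = (I (i + 1)).comp (dCx i))
    -- at the junction, the differential of Cx is D = d ∘ (S^{j+1})⁻¹ ∘ d
    (hjunction : ∀ v : B (j + 1),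
      I (j + 1 + 1) (dCx (j + 1) (P (j + 1) v)) = dA (j + 1) (Sinv (dB (j + 1) v))) :
    -- conclusion: 0 → coker S̃ → H(Cx) → ker S̃ → 0 in every degree
    ∀ n : ℤ,
      ∃ (f : (Hmod R (fun m => dB (m + 1)) n ⧸
                LinearMap.range (inducedH R dA (fun m => dB (m + 1)) S hcomm n))
              →ₗ[R] Hmod R dCx (n + 1))
        (g : Hmod R dCx (n + 1) →ₗ[R] Hmod R dA (n + 1)),
        Function.Injective f ∧
        LinearMap.range f = LinearMap.ker g ∧
        LinearMap.range g = LinearMap.ker (inducedH R dA (fun m => dB (m + 1)) S hcomm (n + 1)) := by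
  intro n
  have hddA' : ∀ i x, dA (i+1) (dA i x) = 0 := fun i x => LinearMap.congr_fun (hddA i) x
  have hddB' : ∀ i x, dB (i+1) (dB i x) = 0 := fun i x => LinearMap.congr_fun (hddB i) x
  have hcomm' : ∀ i x, dB (i+1) (S i x) = S (i+1) (dA i x) :=
    fun i x => LinearMap.congr_fun (hcomm i) x
  have hinj' : ∀ i, i ≤ j + 1 → Function.Injective (S i) := by
    intro i hi
    rcases hi.lt_or_eq with h | h
    · exact hinj i h
    · subst h; exact Function.LeftInverse.injective hSinv₂
  have hsurj' : ∀ i, j + 1 ≤ i → Function.Surjective (S i) := by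
    intro i hi
    rcases hi.lt_or_eq with h | h
    · exact hsurj i h
    · subst h; exact Function.RightInverse.surjective hSinv₁
  have hPc : ∀ i, i + 1 ≤ j + 1 → ∀ x, dCx i (P i x) = P (i+1) (dB i x) :=
    fun i hi x => LinearMap.congr_fun (hP_comm i hi) x
  have hIc : ∀ i, j + 1 < i → ∀ x, dA i (I i x) = I (i+1) (dCx i x) :=
    fun i hi x => LinearMap.congr_fun (hI_comm i hi) x
  have hPk : ∀ i, i + 1 ≤ j + 1 → ∀ x, P (i+1) x = 0 ↔ ∃ a, S i a = x := by
    intro i hi x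
    rw [← LinearMap.mem_ker, hP_ker i hi, LinearMap.mem_range]
  have hIr : ∀ i, j + 1 < i → ∀ x, S i x = 0 ↔ ∃ c, I i c = x := by
    intro i hi x
    rw [← LinearMap.mem_ker, ← hI_range i hi, LinearMap.mem_range]
  let Z := coneZ R (dA (n+1+1)) (dB (n+1+1)) (S (n+1+1))
  let Bd := (coneB R (dA (n+1)) (dB (n+1)) (S (n+1))).comap Z.subtype
  suffices h : Nonempty ((Z ⧸ Bd) ≃ₗ[R] Hmod R dCx (n+1)) by
    obtain ⟨e⟩ := h
    exact ses_of_cone R A B dA dB S hddA hcomm n _ e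
  rcases le_or_gt (n+1+1) (j+1) with hk | hk
  · -- low degrees
    have key : ∀ b : B (n+1+1), dCx (n+1+1) (P (n+1+1) b) = 0 ↔
        ∃ a, dA (n+1+1) a = 0 ∧ dB (n+1+1) b = S (n+1+1) a := by
      intro b
      rcases hk.lt_or_eq with h | h
      · have h' : n+1+1+1 ≤ j+1 := h
        rw [hPc _ h', hPk _ h']
        constructor
        · rintro ⟨a, ha⟩
          refine ⟨a, hinj' _ h' ?_, ha.symm⟩
          rw [← hcomm', ha, hddB', map_zero]
        · rintro ⟨a, -, ha⟩
          exact ⟨a, ha.symm⟩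
      · obtain rfl : j = n + 1 := by omega
        rw [← (hI_inj (n+1+1+1) (by omega)).eq_iff, hjunction, map_zero]
        constructor
        · intro h0
          exact ⟨_, h0, (hSinv₁ _).symm⟩
        · rintro ⟨a, ha, hb⟩
          rw [hb, hSinv₂, ha]
    let φ0 : Z →ₗ[R] cocycles R dCx (n+1) :=
      LinearMap.codRestrict _ ((P (n+1+1)).comp ((LinearMap.snd R _ _).comp Z.subtype))
        (fun z => (key z.1.2).2 ⟨z.1.1, z.2.1, z.2.2⟩)
    let φ : Z →ₗ[R] Hmod R dCx (n+1) := (Submodule.mkQ _).comp φ0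
    have hφ : Function.Surjective φ := by
      intro q
      obtain ⟨c, rfl⟩ := Submodule.Quotient.mk_surjective _ q
      obtain ⟨b, hb⟩ := hP_surj _ hk c.1
      obtain ⟨a, ha, hab⟩ := (key b).1 (by rw [hb]; exact c.2)
      refine ⟨⟨(a, b), ha, hab⟩, ?_⟩
      refine congrArg Submodule.Quotient.mk (Subtype.ext ?_)
      exact hb
    have hker : Bd = LinearMap.ker φ := by
      ext z
      have h1 : z ∈ LinearMap.ker φ ↔ ∃ c, dCx (n+1) c = P (n+1+1) z.1.2 :=
        Submodule.Quotient.mk_eq_zero _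
      rw [h1]
      constructor
      · rintro ⟨x, y, hx, hy⟩
        refine ⟨P (n+1) y, ?_⟩
        have hy' : z.1.2 = S (n+1) x + dB (n+1) y := hy
        rw [hPc _ hk, hy', map_add, (hPk _ hk (S (n+1) x)).2 ⟨x, rfl⟩, zero_add]
      · rintro ⟨c, hc⟩
        obtain ⟨y, rfl⟩ := hP_surj (n+1) (by omega) c
        rw [hPc _ hk] at hc
        obtain ⟨x, hx⟩ := (hPk _ hk (z.1.2 - dB (n+1) y)).1 (by rw [map_sub, hc, sub_self])
        refine ⟨x, y, ?_, ?_⟩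
        · apply hinj' _ hk
          rw [← hcomm', hx, map_sub, hddB', sub_zero]
          exact z.2.2.symm
        · rw [hx, sub_add_cancel]; rfl
    exact ⟨(Submodule.quotEquivOfEq _ _ hker).trans (φ.quotKerEquivOfSurjective hφ)⟩
  · -- high degrees
    let ψ0 : cocycles R dCx (n+1) →ₗ[R] Z :=
      LinearMap.codRestrict Z ((LinearMap.inl R (A (n+1+1)) (B (n+1+1))).comp
        ((I (n+1+1)).comp (Submodule.subtype _))) (fun c => by
          refine ⟨?_, ?_⟩
          · change dA (n+1+1) (I (n+1+1) c.1) = 0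
            rw [hIc _ hk, show dCx (n+1+1) c.1 = 0 from c.2, map_zero]
          · change dB (n+1+1) 0 = S (n+1+1) (I (n+1+1) c.1)
            rw [map_zero, (hIr _ hk _).2 ⟨_, rfl⟩])
    let ψ : cocycles R dCx (n+1) →ₗ[R] (Z ⧸ Bd) := Bd.mkQ.comp ψ0
    have hψ : Function.Surjective ψ := by
      intro q
      obtain ⟨z, rfl⟩ := Submodule.Quotient.mk_surjective _ q
      obtain ⟨x, hx⟩ := hsurj' (n+1) (by omega) z.1.2
      obtain ⟨c, hc⟩ := (hIr _ hk (z.1.1 - dA (n+1) x)).1 (by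
        rw [map_sub, ← hcomm', hx, ← z.2.2, sub_self])
      refine ⟨⟨c, ?_⟩, ?_⟩
      · apply hI_inj (n+1+1+1) (by omega)
        rw [← hIc _ hk, hc, map_sub, hddA', sub_zero, map_zero]
        exact z.2.1
      · refine (Submodule.Quotient.eq Bd).2 ⟨-x, 0, ?_, ?_⟩
        · change I (n+1+1) c - z.1.1 = dA (n+1) (-x)
          rw [hc, map_neg]; abel
        · change 0 - z.1.2 = S (n+1) (-x) + dB (n+1) 0
          rw [map_neg, map_zero, hx]; abel
    have hker : cobounds R dCx (n+1) = LinearMap.ker ψ := by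
      ext c
      have h1 : c ∈ LinearMap.ker ψ ↔ ∃ x y, I (n+1+1) c.1 = dA (n+1) x ∧
          0 = S (n+1) x + dB (n+1) y :=
        Submodule.Quotient.mk_eq_zero _
      have h2 : c ∈ cobounds R dCx (n+1) ↔ ∃ c', dCx (n+1) c' = c.1 := Iff.rfl
      rw [h1, h2]
      rcases (show j ≤ n by omega).lt_or_eq with h | h
      · constructor
        · rintro ⟨c', hc'⟩
          refine ⟨I (n+1) c', 0, ?_, ?_⟩
          · rw [hIc _ (by omega), hc']
          · rw [(hIr (n+1) (by omega) _).2 ⟨_, rfl⟩, map_zero, add_zero]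
        · rintro ⟨x, y, hx, hy⟩
          obtain ⟨u, rfl⟩ := hsurj' n (by omega) y
          obtain ⟨c', hc'⟩ := (hIr (n+1) (by omega) (x + dA n u)).1 (by
            rw [map_add, ← hcomm', ← hy])
          refine ⟨c', hI_inj _ hk ?_⟩
          rw [← hIc _ (by omega), hc', map_add, hddA', add_zero, hx]
      · subst h
        constructor
        · rintro ⟨c', hc'⟩
          obtain ⟨v, rfl⟩ := hP_surj _ le_rfl c'
          refine ⟨Sinv (dB (j+1) v), -v, ?_, ?_⟩
          · rw [← hc', hjunction]
          · rw [hSinv₁, map_neg, add_neg_cancel]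
        · rintro ⟨x, y, hx, hy⟩
          refine ⟨P (j+1) (-y), hI_inj _ hk ?_⟩
          rw [hjunction, hx, map_neg, ← eq_neg_of_add_eq_zero_left hy.symm, hSinv₂]
    exact ⟨((Submodule.quotEquivOfEq _ _ hker).trans (ψ.quotKerEquivOfSurjective hψ)).symm⟩
end

section
/- If additionally the induced maps on cohomology S̃^i : H^i(A•) → H^{i+1}(B•) are all zero, then for each i there is a short exact sequence 0 → H^i(B•) → H^i(C•) → H^i(A•) → 0, where the first map is induced by the projections/inclusions relating B• and C•, and the second by those relating C• and A•. -/
open Function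

variable (R : Type) [CommRing R]

/-- A linear relation between cocycles that is total and compatible with coboundaries induces
a map on the quotients. -/
theorem exists_map_of_rel {V W : Type} [AddCommGroup V] [Module R V] [AddCommGroup W] [Module R W]
    (ZV : Submodule R V) (BV : Submodule R V) (ZW : Submodule R W) (BW : Submodule R W)
    (G : Submodule R (V × W))
    (htot : ∀ x ∈ ZV, ∃ y ∈ ZW, (x, y) ∈ G)
    (hwd : ∀ x y, x ∈ ZV → y ∈ ZW → x ∈ BV → (x, y) ∈ G → y ∈ BW) :
    ∃ f : (ZV ⧸ BV.comap ZV.subtype) →ₗ[R] (ZW ⧸ BW.comap ZW.subtype),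
      ∀ (x : ZV) (y : ZW), ((x : V), (y : W)) ∈ G →
        f (Submodule.Quotient.mk x) = Submodule.Quotient.mk y := by
  have htot' : ∀ x : ZV, ∃ y : ZW, ((x : V), (y : W)) ∈ G := fun x => by
    obtain ⟨y, hy, h⟩ := htot x x.2
    exact ⟨⟨y, hy⟩, h⟩
  choose φ hφ using htot'
  have key : ∀ (x : ZV) (y y' : ZW), ((x : V), (y : W)) ∈ G → ((x : V), (y' : W)) ∈ G →
      (Submodule.Quotient.mk y : ZW ⧸ BW.comap ZW.subtype) = Submodule.Quotient.mk y' := by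
    intro x y y' h h'
    rw [Submodule.Quotient.eq]
    have := G.sub_mem h h'
    simp only [Prod.mk_sub_mk, sub_self] at this
    exact hwd 0 _ (ZV.zero_mem) (ZW.sub_mem y.2 y'.2) BV.zero_mem this
  let F : ZV →ₗ[R] (ZW ⧸ BW.comap ZW.subtype) :=
    { toFun := fun x => Submodule.Quotient.mk (φ x)
      map_add' := fun x x' => by
        rw [← Submodule.Quotient.mk_add]
        exact key (x + x') _ _ (hφ _) (G.add_mem (hφ x) (hφ x'))
      map_smul' := fun r x => by
        rw [RingHom.id_apply, ← Submodule.Quotient.mk_smul]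
        exact key (r • x) _ _ (hφ _) (G.smul_mem r (hφ x)) }
  refine ⟨Submodule.liftQ _ F ?_, ?_⟩
  · intro x hx
    rw [LinearMap.mem_ker]
    change (Submodule.Quotient.mk (φ x) : ZW ⧸ BW.comap ZW.subtype) = 0
    rw [Submodule.Quotient.mk_eq_zero]
    exact hwd x _ x.2 (φ x).2 hx (hφ x)
  · intro x y h
    exact key x _ _ (hφ x) h

/-- Short exact sequence on quotients from two linear relations. -/
theorem exists_ses_of_rel {U V W : Type} [AddCommGroup U] [Module R U]
    [AddCommGroup V] [Module R V] [AddCommGroup W] [Module R W]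
    (ZU BU : Submodule R U) (ZV BV : Submodule R V) (ZW BW : Submodule R W)
    (G : Submodule R (U × V)) (K : Submodule R (V × W))
    (htot : ∀ x ∈ ZU, ∃ y ∈ ZV, (x, y) ∈ G)
    (hwd : ∀ x y, x ∈ ZU → y ∈ ZV → x ∈ BU → (x, y) ∈ G → y ∈ BV)
    (htot' : ∀ x ∈ ZV, ∃ y ∈ ZW, (x, y) ∈ K)
    (hwd' : ∀ x y, x ∈ ZV → y ∈ ZW → x ∈ BV → (x, y) ∈ K → y ∈ BW)
    (e1 : ∀ x y, x ∈ ZU → y ∈ ZV → (x, y) ∈ G → y ∈ BV → x ∈ BU)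
    (e2 : ∀ x y z, x ∈ ZU → y ∈ ZV → z ∈ ZW → (x, y) ∈ G → (y, z) ∈ K → z ∈ BW)
    (e2' : ∀ y z, y ∈ ZV → z ∈ ZW → (y, z) ∈ K → z ∈ BW → ∃ x ∈ ZU, (x, y) ∈ G)
    (e3 : ∀ z ∈ ZW, ∃ y ∈ ZV, ∃ z' ∈ ZW, (y, z') ∈ K ∧ z' - z ∈ BW) :
    ∃ (f : (ZU ⧸ BU.comap ZU.subtype) →ₗ[R] (ZV ⧸ BV.comap ZV.subtype))
      (g : (ZV ⧸ BV.comap ZV.subtype) →ₗ[R] (ZW ⧸ BW.comap ZW.subtype)),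
      Function.Injective f ∧ LinearMap.range f = LinearMap.ker g ∧ Function.Surjective g := by
  obtain ⟨f, hf⟩ := exists_map_of_rel R ZU BU ZV BV G htot hwd
  obtain ⟨g, hg⟩ := exists_map_of_rel R ZV BV ZW BW K htot' hwd'
  refine ⟨f, g, ?_, ?_, ?_⟩
  · rw [injective_iff_map_eq_zero]
    intro q hq
    obtain ⟨x, rfl⟩ := Submodule.Quotient.mk_surjective _ q
    obtain ⟨y, hy, h⟩ := htot x x.2
    rw [hf x ⟨y, hy⟩ h, Submodule.Quotient.mk_eq_zero] at hq
    rw [Submodule.Quotient.mk_eq_zero]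
    exact e1 x y x.2 hy h hq
  · ext q
    rw [LinearMap.mem_range, LinearMap.mem_ker]
    constructor
    · rintro ⟨p, rfl⟩
      obtain ⟨x, rfl⟩ := Submodule.Quotient.mk_surjective _ p
      obtain ⟨y, hy, h⟩ := htot x x.2
      obtain ⟨z, hz, h'⟩ := htot' y hy
      rw [hf x ⟨y, hy⟩ h, hg ⟨y, hy⟩ ⟨z, hz⟩ h', Submodule.Quotient.mk_eq_zero]
      exact e2 x y z x.2 hy hz h h'
    · intro hq
      obtain ⟨y, rfl⟩ := Submodule.Quotient.mk_surjective _ q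
      obtain ⟨z, hz, h'⟩ := htot' y y.2
      rw [hg y ⟨z, hz⟩ h', Submodule.Quotient.mk_eq_zero] at hq
      obtain ⟨x, hx, h⟩ := e2' y z y.2 hz h' hq
      exact ⟨Submodule.Quotient.mk ⟨x, hx⟩, hf ⟨x, hx⟩ y h⟩
  · intro q
    obtain ⟨z, rfl⟩ := Submodule.Quotient.mk_surjective _ q
    obtain ⟨y, hy, z', hz', h, hb⟩ := e3 z z.2
    refine ⟨Submodule.Quotient.mk ⟨y, hy⟩, ?_⟩
    rw [hg ⟨y, hy⟩ ⟨z', hz'⟩ h, Submodule.Quotient.eq]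
    exact hb

/-- If, in addition to the BGG setup of the previous statement (output
complex `Cx` with `Cx i = coker S^{i-1}` for `i ≤ j+1` via projections `P`,
`Cx i = ker S^i` for `i > j+1` via inclusions `I`, junction differential
`D = d ∘ (S^{j+1})⁻¹ ∘ d`), the maps induced on cohomology by `S` are all zero, then for
each degree there is a short exact sequence `0 → H^i(B) → H^i(Cx) → H^i(A) → 0`, the maps
being induced by the projections/inclusions relating `B`, `Cx` and `A`. -/
theorem stmt5_bgg_output_cohomology_when_S_zero_on_cohomology
    (A B Cx : ℤ → Type)
    [∀ i, AddCommGroup (A i)] [∀ i, Module R (A i)]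
    [∀ i, AddCommGroup (B i)] [∀ i, Module R (B i)]
    [∀ i, AddCommGroup (Cx i)] [∀ i, Module R (Cx i)]
    (dA : ∀ i : ℤ, A i →ₗ[R] A (i + 1))
    (dB : ∀ i : ℤ, B i →ₗ[R] B (i + 1))
    (dCx : ∀ i : ℤ, Cx i →ₗ[R] Cx (i + 1))
    (hddA : ∀ i : ℤ, (dA (i + 1)).comp (dA i) = 0)
    (hddB : ∀ i : ℤ, (dB (i + 1)).comp (dB i) = 0)
    (hddCx : ∀ i : ℤ, (dCx (i + 1)).comp (dCx i) = 0)
    (S : ∀ i : ℤ, A i →ₗ[R] B (i + 1))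
    (hcomm : ∀ i : ℤ, (dB (i + 1)).comp (S i) = (S (i + 1)).comp (dA i))
    (j : ℤ)
    (hinj : ∀ i : ℤ, i < j + 1 → Function.Injective (S i))
    (Sinv : B (j + 1 + 1) →ₗ[R] A (j + 1))
    (hSinv₁ : ∀ b : B (j + 1 + 1), S (j + 1) (Sinv b) = b)
    (hSinv₂ : ∀ a : A (j + 1), Sinv (S (j + 1) a) = a)
    (hsurj : ∀ i : ℤ, j + 1 < i → Function.Surjective (S i))
    -- in degrees i ≤ j+1, Cx is the cokernel of S, via the projections P
    (P : ∀ i : ℤ, B i →ₗ[R] Cx i)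
    (hP_surj : ∀ i : ℤ, i ≤ j + 1 → Function.Surjective (P i))
    (hP_ker : ∀ i : ℤ, i + 1 ≤ j + 1 → LinearMap.ker (P (i + 1)) = LinearMap.range (S i))
    (hP_comm : ∀ i : ℤ, i + 1 ≤ j + 1 →
      (dCx i).comp (P i) = (P (i + 1)).comp (dB i))
    -- in degrees i > j+1, Cx is the kernel of S, via the inclusions I
    (I : ∀ i : ℤ, Cx i →ₗ[R] A i)
    (hI_inj : ∀ i : ℤ, j + 1 < i → Function.Injective (I i))
    (hI_range : ∀ i : ℤ, j + 1 < i → LinearMap.range (I i) = LinearMap.ker (S i))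
    (hI_comm : ∀ i : ℤ, j + 1 < i → (dA i).comp (I i) = (I (i + 1)).comp (dCx i))
    -- at the junction, the differential of Cx is D = d ∘ (S^{j+1})⁻¹ ∘ d
    (hjunction : ∀ v : B (j + 1),
      I (j + 1 + 1) (dCx (j + 1) (P (j + 1) v)) = dA (j + 1) (Sinv (dB (j + 1) v)))
    -- additional hypothesis: S induces the zero map on cohomology in every degree
    (hS0 : ∀ n : ℤ, inducedH R dA (fun m => dB (m + 1)) S hcomm n = 0) :
    -- conclusion: 0 → H(B) → H(Cx) → H(A) → 0 in every degree
    ∀ n : ℤ,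
      ∃ (f : Hmod R dB n →ₗ[R] Hmod R dCx n)
        (g : Hmod R dCx n →ₗ[R] Hmod R dA n),
        Function.Injective f ∧
        LinearMap.range f = LinearMap.ker g ∧
        Function.Surjective g := by
  have ddA : ∀ i (x : A i), dA (i + 1) (dA i x) = 0 := fun i x => LinearMap.congr_fun (hddA i) x
  have ddB : ∀ i (x : B i), dB (i + 1) (dB i x) = 0 := fun i x => LinearMap.congr_fun (hddB i) x
  have dS : ∀ i (x : A i), dB (i + 1) (S i x) = S (i + 1) (dA i x) :=
    fun i x => LinearMap.congr_fun (hcomm i) x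
  have dP : ∀ i, i + 1 ≤ j + 1 → ∀ x : B i, dCx i (P i x) = P (i + 1) (dB i x) :=
    fun i hi x => LinearMap.congr_fun (hP_comm i hi) x
  have dI : ∀ i, j + 1 < i → ∀ x : Cx i, dA i (I i x) = I (i + 1) (dCx i x) :=
    fun i hi x => LinearMap.congr_fun (hI_comm i hi) x
  have PS : ∀ i, i + 1 ≤ j + 1 → ∀ x : A i, P (i + 1) (S i x) = 0 := fun i hi x => by
    have : S i x ∈ LinearMap.ker (P (i + 1)) := by rw [hP_ker i hi]; exact ⟨x, rfl⟩
    exact this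
  have kerP : ∀ i, i + 1 ≤ j + 1 → ∀ x : B (i + 1), P (i + 1) x = 0 → ∃ a, S i a = x :=
    fun i hi x hx => by
      have : x ∈ LinearMap.range (S i) := by rw [← hP_ker i hi]; exact hx
      exact this
  have SI : ∀ i, j + 1 < i → ∀ x : Cx i, S i (I i x) = 0 := fun i hi x => by
    have : I i x ∈ LinearMap.ker (S i) := by rw [← hI_range i hi]; exact ⟨x, rfl⟩
    exact this
  have kerS : ∀ i, j + 1 < i → ∀ x : A i, S i x = 0 → ∃ c, I i c = x := fun i hi x hx => by
    have : x ∈ LinearMap.range (I i) := by rw [hI_range i hi]; exact hx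
    exact this
  have Sinj : ∀ i, i ≤ j + 1 → Function.Injective (S i) := fun i hi => by
    rcases hi.lt_or_eq with h | rfl
    · exact hinj i h
    · exact Function.LeftInverse.injective hSinv₂
  have Ssurj : ∀ i, j + 1 ≤ i → Function.Surjective (S i) := fun i hi => by
    rcases hi.lt_or_eq with h | rfl
    · exact hsurj i h
    · exact Function.RightInverse.surjective hSinv₁
  have S0 : ∀ m (a : A m), dA m a = 0 → ∃ b, dB m b = S m a := by
    intro m a ha
    obtain ⟨n, rfl⟩ : ∃ n, m = n + 1 := ⟨m - 1, by ring⟩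
    have h := LinearMap.congr_fun (hS0 n) (Submodule.Quotient.mk ⟨a, ha⟩)
    exact (Submodule.Quotient.mk_eq_zero (cobounds R (fun m => dB (m + 1)) n)).1 h
  intro n
  rcases le_or_gt (n + 1) (j + 1) with hn | hn
  · -- low degrees: cokernel part
    have cyc : ∀ b a, dB (n + 1) b = S (n + 1) a → dA (n + 1) a = 0 →
        dCx (n + 1) (P (n + 1) b) = 0 := by
      intro b a h ha
      rcases hn.lt_or_eq with h' | h'
      · rw [dP _ (by omega), h, PS _ (by omega)]
      · obtain rfl : n = j := by omega
        apply hI_inj _ (by omega)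
        rw [hjunction, h, hSinv₂, ha, map_zero]
    have cyc' : ∀ b, dCx (n + 1) (P (n + 1) b) = 0 →
        ∃ a, dB (n + 1) b = S (n + 1) a ∧ dA (n + 1) a = 0 := by
      intro b h
      rcases hn.lt_or_eq with h' | h'
      · rw [dP _ (by omega)] at h
        obtain ⟨a, ha⟩ := kerP _ (by omega) _ h
        refine ⟨a, ha.symm, Sinj (n + 1 + 1) (by omega) ?_⟩
        rw [← dS, ha, ddB, map_zero]
      · obtain rfl : n = j := by omega
        refine ⟨Sinv (dB _ b), (hSinv₁ _).symm, ?_⟩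
        rw [← hjunction, h, map_zero]
    have bd : ∀ b c', dCx n c' = P (n + 1) b → ∃ b' a', b = dB n b' + S n a' := by
      intro b c' h
      obtain ⟨b', rfl⟩ := hP_surj n (by omega) c'
      rw [dP n hn] at h
      obtain ⟨a', ha'⟩ := kerP n hn (b - dB n b') (by rw [map_sub, h, sub_self])
      exact ⟨b', a', by rw [ha']; abel⟩
    let G : Submodule R (B (n + 1) × Cx (n + 1)) := (P (n + 1)).graph
    let K : Submodule R (Cx (n + 1) × A (n + 1)) :=
      { carrier := {p | ∃ b, P (n + 1) b = p.1 ∧ dB (n + 1) b = S (n + 1) p.2}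
        zero_mem' := ⟨0, by simp, by simp⟩
        add_mem' := by
          rintro p q ⟨b, h1, h2⟩ ⟨b', h1', h2'⟩
          exact ⟨b + b', by simp [h1, h1'], by simp [h2, h2']⟩
        smul_mem' := by
          rintro r p ⟨b, h1, h2⟩
          exact ⟨r • b, by simp [h1], by simp [h2]⟩ }
    have hG : ∀ x y, (x, y) ∈ G ↔ y = P (n + 1) x := fun x y => LinearMap.mem_graph_iff _ _
    have hK : ∀ x y, (x, y) ∈ K ↔ ∃ b, P (n + 1) b = x ∧ dB (n + 1) b = S (n + 1) y :=
      fun x y => Iff.rfl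
    refine exists_ses_of_rel R (cocycles R dB n) (LinearMap.range (dB n)) (cocycles R dCx n)
      (LinearMap.range (dCx n)) (cocycles R dA n) (LinearMap.range (dA n)) G K
      ?_ ?_ ?_ ?_ ?_ ?_ ?_ ?_ <;> simp only [hG, hK, LinearMap.mem_ker, LinearMap.mem_range]
    · intro b hb
      exact ⟨_, cyc b 0 (by rw [hb, map_zero]) (map_zero _), rfl⟩
    · rintro _ _ - - ⟨b', rfl⟩ rfl
      exact ⟨P n b', dP n hn b'⟩
    · intro c hc
      obtain ⟨b, rfl⟩ := hP_surj _ hn c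
      obtain ⟨a, h1, h2⟩ := cyc' b hc
      exact ⟨a, h2, b, rfl, h1⟩
    · rintro _ a - - ⟨c', h⟩ ⟨b, rfl, hb⟩
      obtain ⟨b', a', rfl⟩ := bd _ _ h
      rw [map_add, ddB, zero_add, dS] at hb
      exact ⟨a', Sinj _ hn hb⟩
    · rintro b _ hb - rfl ⟨c', h⟩
      obtain ⟨b', a', rfl⟩ := bd _ _ h
      rw [map_add, ddB, zero_add, dS] at hb
      obtain ⟨b'', h''⟩ := S0 n a' (Sinj _ hn (by rw [hb, map_zero]))
      exact ⟨b' + b'', by rw [map_add, h'']⟩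
    · rintro b _ a hb - - rfl ⟨b1, h1, h2⟩
      obtain ⟨a', ha'⟩ := kerP n hn (b1 - b) (by rw [map_sub, h1, sub_self])
      refine ⟨a', Sinj _ hn ?_⟩
      rw [← dS, ha', map_sub, hb, h2, sub_zero]
    · rintro _ _ - - ⟨b, rfl, hb⟩ ⟨a', rfl⟩
      refine ⟨b - S n a', ?_, ?_⟩
      · rw [map_sub, hb, dS, sub_self]
      · rw [map_sub, PS n hn, sub_zero]
    · intro a ha
      obtain ⟨b, hb⟩ := S0 _ a ha
      exact ⟨P _ b, cyc b a hb ha, a, ha, ⟨b, rfl, hb⟩, 0, by simp⟩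
  · -- high degrees: kernel part
    have hn' : j + 1 ≤ n := by omega
    have bd : ∀ c' : Cx n, ∃ a' b', S n a' = dB n b' ∧ I (n + 1) (dCx n c') = dA n a' := by
      intro c'
      rcases hn'.lt_or_eq with h | rfl
      · exact ⟨I n c', 0, by rw [SI n h, map_zero], (dI n h c').symm⟩
      · obtain ⟨b', rfl⟩ := hP_surj _ le_rfl c'
        exact ⟨Sinv (dB _ b'), b', hSinv₁ _, hjunction b'⟩
    have bd' : ∀ a' b', S n a' = dB n b' → ∃ c', I (n + 1) (dCx n c') = dA n a' := by
      intro a' b' h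
      rcases hn'.lt_or_eq with h' | rfl
      · obtain ⟨m, rfl⟩ : ∃ m, n = m + 1 := ⟨n - 1, by ring⟩
        obtain ⟨a'', rfl⟩ := Ssurj m (by omega) b'
        obtain ⟨c', hc'⟩ := kerS _ h' (a' - dA m a'') (by rw [map_sub, h, dS, sub_self])
        exact ⟨c', by rw [← dI _ h', hc', map_sub, ddA, sub_zero]⟩
      · exact ⟨P _ b', by rw [hjunction, ← h, hSinv₂]⟩
    let G : Submodule R (B (n + 1) × Cx (n + 1)) :=
      { carrier := {p | ∃ a, S n a = p.1 ∧ I (n + 1) p.2 = dA n a}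
        zero_mem' := ⟨0, by simp, by simp⟩
        add_mem' := by
          rintro p q ⟨b, h1, h2⟩ ⟨b', h1', h2'⟩
          exact ⟨b + b', by simp [h1, h1'], by simp [h2, h2']⟩
        smul_mem' := by
          rintro r p ⟨b, h1, h2⟩
          exact ⟨r • b, by simp [h1], by simp [h2]⟩ }
    let K : Submodule R (Cx (n + 1) × A (n + 1)) := (I (n + 1)).graph
    have hG : ∀ x y, (x, y) ∈ G ↔ ∃ a, S n a = x ∧ I (n + 1) y = dA n a := fun x y => Iff.rfl
    have hK : ∀ x y, (x, y) ∈ K ↔ y = I (n + 1) x := fun x y => LinearMap.mem_graph_iff _ _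
    have cyc : ∀ c, dA (n + 1) (I (n + 1) c) = 0 → dCx (n + 1) c = 0 := by
      intro c h
      apply hI_inj (n + 1 + 1) (by omega)
      rw [← dI _ hn, h, map_zero]
    refine exists_ses_of_rel R (cocycles R dB n) (LinearMap.range (dB n)) (cocycles R dCx n)
      (LinearMap.range (dCx n)) (cocycles R dA n) (LinearMap.range (dA n)) G K
      ?_ ?_ ?_ ?_ ?_ ?_ ?_ ?_ <;> simp only [hG, hK, LinearMap.mem_ker, LinearMap.mem_range]
    · intro b hb
      obtain ⟨a, rfl⟩ := Ssurj n hn' b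
      obtain ⟨c, hc⟩ := kerS _ hn (dA n a) (by rw [← dS, hb])
      exact ⟨c, cyc c (by rw [hc, ddA]), a, rfl, hc⟩
    · rintro _ c - - ⟨b', rfl⟩ ⟨a, h1, h2⟩
      obtain ⟨c', h⟩ := bd' a b' h1
      exact ⟨c', hI_inj _ hn (by rw [h, h2])⟩
    · intro c hc
      exact ⟨_, by rw [dI _ hn, hc, map_zero], rfl⟩
    · rintro _ _ - - ⟨c', rfl⟩ rfl
      obtain ⟨a', b', -, h⟩ := bd c'
      exact ⟨a', h.symm⟩
    · rintro _ _ - - ⟨a, rfl, h⟩ ⟨c', rfl⟩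
      obtain ⟨a', b', h1, h2⟩ := bd c'
      obtain ⟨b'', h3⟩ := S0 n (a - a') (by rw [map_sub, ← h, ← h2, sub_self])
      exact ⟨b'' + b', by rw [map_add, h3, map_sub, h1]; abel⟩
    · rintro _ c _ - - - ⟨a, rfl, h⟩ rfl
      exact ⟨a, h.symm⟩
    · rintro c _ - - rfl ⟨a', h⟩
      exact ⟨S n a', by rw [dS, h, SI _ hn], a', rfl, h.symm⟩
    · intro a ha
      obtain ⟨b, hb⟩ := S0 _ a ha
      obtain ⟨a', rfl⟩ := Ssurj n hn' b
      obtain ⟨c, hc⟩ := kerS _ hn (a - dA n a') (by rw [map_sub, ← hb, dS, sub_self])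
      have hz : dA (n + 1) (I (n + 1) c) = 0 := by rw [hc, map_sub, ha, ddA, sub_zero]
      exact ⟨c, cyc c hz, _, hz, rfl, -a', by rw [hc, map_neg]; abel⟩
end
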